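/- arXiv:1806.02798 — 3 statements merged into one kernel-verified Lean document; each statement's English description precedes it below -/
import Mathlib

section
/- Let 0 ≤ λ < 1/2 and let η ∈ X_λ. Then Tη ∈ X_λ, i.e., the box-ball operator T preserves the asymptotic density of balls on both half-lines. -/
open MeasureTheory Filter Finset

/-- A ball configuration: a box at each integer, occupied (`true`) or empty (`false`). -/
abbrev Cfg := ℤ → Bool

/-- Numerical (integer) value of a box. -/
def valZ (b : Bool) : ℤ := if b then 1 else 0

/-- Numerical (real) value of a box. -/
def valR (b : Bool) : ℝ := if b then 1 else 0

/-- `x` is a record of the configuration `η`: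
for every `z ≤ x`, the number of balls in `[z,x]` is strictly smaller than the
number of empty boxes in `[z,x]`. -/
def isRecord (η : Cfg) (x : ℤ) : Prop :=
  ∀ z ≤ x, (∑ y ∈ Finset.Icc z x, valZ (η y)) < ∑ y ∈ Finset.Icc z x, (1 - valZ (η y))

open Classical in
/-- The box-ball (Takahashi–Satsuma) operator `T`. -/
noncomputable def bbsT (η : Cfg) : Cfg := fun x => if isRecord η x then false else !(η x)

/-- `η` has asymptotic density `lam` of balls on both half lines. -/
def inXlam (lam : ℝ) (η : Cfg) : Prop :=
  Tendsto (fun y : ℕ => (∑ x ∈ Finset.Icc (-(y : ℤ)) 0, valR (η x)) / (y : ℝ))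
    atTop (nhds lam) ∧
  Tendsto (fun y : ℕ => (∑ x ∈ Finset.Icc (0 : ℤ) (y : ℤ), valR (η x)) / (y : ℝ))
    atTop (nhds lam)

/-- `η ∈ 𝒳`: it has a well-defined density `0 < lam < 1/2`. -/
def inX (η : Cfg) : Prop := ∃ lam : ℝ, 0 < lam ∧ lam < 1 / 2 ∧ inXlam lam η

/-- `ξ` is a walk lift of the configuration `η`. -/
def IsLift (η : Cfg) (ξ : ℤ → ℤ) : Prop :=
  ∀ x : ℤ, ξ x - ξ (x - 1) = 2 * valZ (η x) - 1

/-- Running minimum `min_{y ≤ x} ξ(y)` of a walk. -/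
noncomputable def runMin (ξ : ℤ → ℤ) (x : ℤ) : ℤ := sInf (ξ '' Set.Iic x)

/-- The box-ball operator on walks: reflection at the running minimum. -/
noncomputable def liftT (ξ : ℤ → ℤ) : ℤ → ℤ := fun x => 2 * runMin ξ x - ξ x

/-- The canonical walk lift of `η` with value `0` at the origin. -/
noncomputable def xi0 (η : Cfg) : ℤ → ℤ := fun x =>
  if 0 ≤ x then ∑ y ∈ Finset.Icc 1 x, (2 * valZ (η y) - 1)
  else -∑ y ∈ Finset.Icc (x + 1) 0, (2 * valZ (η y) - 1)

/-!
Let `ξ` be the walk with steps `+1` at balls and `-1` at empty boxes. Density `lam` of `η` on both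
half-lines means that `ξ x = c * x + o(x)` with `c = 2 * lam - 1 ≤ 0`. The records of `η` are the
strict new minima of `ξ`, so `bbsT` reflects `ξ` in its running minimum. As `c ≤ 0`, the minimum of
`ξ` up to `x` is itself `c * x + o(x)`, hence so is the reflected walk, since `2 * c - c = c`.
-/

open Asymptotics Topology

section LinearGrowth

variable {ι E F : Type*} [SeminormedAddCommGroup E] [SeminormedAddCommGroup F]
  {u v : ι → E} {g : ι → F} {l : Filter ι}

lemma exists_norm_le_of_isLittleO_cofinite (h : u =o[cofinite] g) {ε : ℝ} (hε : 0 < ε) :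
    ∃ C : ℝ, ∀ i, ‖u i‖ ≤ ε * ‖g i‖ + C := by
  have hfin : {i | ¬‖u i‖ ≤ ε * ‖g i‖}.Finite := eventually_cofinite.1 (h.bound hε)
  obtain ⟨C, hC⟩ := (hfin.image fun i => ‖u i‖).bddAbove
  refine ⟨max C 0, fun i => ?_⟩
  by_cases hi : ‖u i‖ ≤ ε * ‖g i‖
  · linarith [le_max_right C 0]
  · have hiC : ‖u i‖ ≤ C := hC ⟨i, hi, rfl⟩
    have hg : 0 ≤ ε * ‖g i‖ := by positivity
    linarith [le_max_left C 0]

lemma isLittleO_of_forall_exists_norm_le (hg : Tendsto (fun i => ‖g i‖) l atTop)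
    (h : ∀ ε : ℝ, 0 < ε → ∃ C : ℝ, ∀ i, ‖u i‖ ≤ ε * ‖g i‖ + C) : u =o[l] g := by
  refine IsLittleO.of_bound fun ε hε => ?_
  obtain ⟨C, hC⟩ := h (ε / 2) (half_pos hε)
  filter_upwards [(hg.const_mul_atTop (half_pos hε)).eventually_ge_atTop C] with i hi
  linarith [hC i]

lemma isLittleO_congr_of_norm_sub_le (hg : Tendsto (fun i => ‖g i‖) l atTop) {B : ℝ}
    (h : ∀ i, ‖u i - v i‖ ≤ B) : u =o[l] g ↔ v =o[l] g := by
  have hsub : (fun i => u i - v i) =o[l] g :=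
    (IsBigO.of_bound B (.of_forall fun i => by simpa using h i)).trans_isLittleO
      ((isLittleO_one_left_iff ℝ).2 hg)
  simpa using hsub.add_iff_right (f₂ := v)

lemma tendsto_div_iff_isLittleO {f g : ι → ℝ} {c : ℝ} (hg : ∀ᶠ i in l, g i ≠ 0) :
    Tendsto (fun i => f i / g i) l (𝓝 c) ↔ (fun i => f i - c * g i) =o[l] g := by
  rw [isLittleO_iff_tendsto' (hg.mono fun i hi h => absurd h hi), ← tendsto_sub_nhds_zero_iff]
  refine tendsto_congr' (hg.mono fun i hi => ?_)
  field_simp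

end LinearGrowth

lemma bddBelow_image_Iic_iff {α β : Type*} [LinearOrder α] [LocallyFiniteOrder α]
    [LinearOrder β] [Nonempty β] (f : α → β) (a b : α) :
    BddBelow (f '' Set.Iic a) ↔ BddBelow (f '' Set.Iic b) := by
  wlog hab : a ≤ b generalizing a b
  · exact (this b a (le_of_not_ge hab)).symm
  have hfin : BddBelow (f '' Set.Ioc a b) := ((Set.finite_Ioc a b).image f).bddBelow
  rw [← Set.Iic_union_Ioc_eq_Iic hab, Set.image_union, bddBelow_union, and_iff_left hfin]

/-- The walk `ξ` has slope `c` at both ends: `ξ x = c * x + o(x)` as `x → ±∞`. The cofinite filter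
on `ℤ` is `atBot ⊔ atTop`, so it treats both half-lines at once. -/
def HasSlope (ξ : ℤ → ℤ) (c : ℝ) : Prop :=
  (fun x : ℤ => (ξ x : ℝ) - c * x) =o[cofinite] fun x : ℤ => (x : ℝ)

lemma tendsto_norm_intCast_cofinite : Tendsto (fun x : ℤ => ‖(x : ℝ)‖) cofinite atTop :=
  (tendsto_norm_cocompact_atTop (E := ℝ)).comp Int.tendsto_coe_cofinite

lemma tendsto_norm_natCast_atTop : Tendsto (fun n : ℕ => ‖(n : ℝ)‖) atTop atTop := by
  simpa using tendsto_natCast_atTop_atTop (R := ℝ)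

/-- The sign of `c + ε` decides whether `c * x - ε * |x|` is antitone or nonpositive for `x ≤ 0`. -/
lemma mul_sub_mul_abs_le_or_nonpos {c ε x y : ℝ} (hc : c ≤ 0) (hε : 0 ≤ ε) (hyx : y ≤ x) :
    c * x - ε * |x| ≤ c * y - ε * |y| ∨ y ≤ 0 ∧ c * x - ε * |x| ≤ 0 := by
  rcases le_total 0 x with hx | hx
  · rw [abs_of_nonneg hx]
    rcases le_total 0 y with hy | hy
    · rw [abs_of_nonneg hy]
      left; nlinarith
    · right; constructor <;> nlinarith
  · have hy : y ≤ 0 := hyx.trans hx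
    rw [abs_of_nonpos hx, abs_of_nonpos hy]
    rcases le_total (c + ε) 0 with h | h
    · left; nlinarith
    · right; constructor <;> nlinarith

namespace HasSlope

variable {ξ : ℤ → ℤ} {c : ℝ}

lemma bddBelow_image_Iic (hξ : HasSlope ξ c) (hc : c < 0) (x : ℤ) :
    BddBelow (ξ '' Set.Iic x) := by
  rw [bddBelow_image_Iic_iff ξ x 0]
  obtain ⟨C, hC⟩ := exists_norm_le_of_isLittleO_cofinite hξ (neg_pos.2 hc)
  refine ⟨⌊-C⌋, ?_⟩
  rintro _ ⟨y, hy, rfl⟩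
  have hy' : (y : ℝ) ≤ 0 := by exact_mod_cast hy
  have hCy := (abs_le.1 (hC y)).1
  rw [Real.norm_eq_abs, abs_of_nonpos hy'] at hCy
  have hξy : -C ≤ ξ y := by linarith
  exact_mod_cast (Int.floor_le (-C)).trans hξy

lemma exists_lowerBound_of_bddBelow (hξ : HasSlope ξ c) (hc : c ≤ 0)
    (hbdd : BddBelow (ξ '' Set.Iic 0)) {ε : ℝ} (hε : 0 < ε) :
    ∃ C : ℝ, ∀ x y : ℤ, y ≤ x → c * x - ε * |(x : ℝ)| - C ≤ ξ y := by
  obtain ⟨C, hC⟩ := exists_norm_le_of_isLittleO_cofinite hξ hε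
  obtain ⟨B, hB⟩ := hbdd
  refine ⟨max C (-B), fun x y hyx => ?_⟩
  have hyx' : (y : ℝ) ≤ x := by exact_mod_cast hyx
  rcases mul_sub_mul_abs_le_or_nonpos hc hε.le hyx' with h | ⟨hy, h⟩
  · have hCy := (abs_le.1 (hC y)).1
    rw [Real.norm_eq_abs] at hCy
    linarith [le_max_left C (-B)]
  · have hBy : (B : ℝ) ≤ ξ y := by exact_mod_cast hB ⟨y, by exact_mod_cast hy, rfl⟩
    linarith [le_max_right C (-B)]

lemma hasSlope_runMin_of_bddBelow (hξ : HasSlope ξ c) (hc : c ≤ 0)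
    (hbdd : BddBelow (ξ '' Set.Iic 0)) : HasSlope (runMin ξ) c := by
  refine isLittleO_of_forall_exists_norm_le tendsto_norm_intCast_cofinite fun ε hε => ?_
  obtain ⟨C, hC⟩ := exists_norm_le_of_isLittleO_cofinite hξ hε
  obtain ⟨D, hD⟩ := hξ.exists_lowerBound_of_bddBelow hc hbdd hε
  refine ⟨max C D, fun x => ?_⟩
  have hbdd_x : BddBelow (ξ '' Set.Iic x) := (bddBelow_image_Iic_iff ξ x 0).2 hbdd
  have hle : (runMin ξ x : ℝ) ≤ ξ x := by
    exact_mod_cast csInf_le hbdd_x ⟨x, Set.self_mem_Iic, rfl⟩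
  obtain ⟨y, hy, hyx⟩ : runMin ξ x ∈ ξ '' Set.Iic x :=
    Int.csInf_mem (Set.nonempty_Iic.image ξ) hbdd_x
  have hCx := (abs_le.1 (hC x)).2
  have hDx := hD x y hy
  rw [hyx] at hDx
  simp only [Real.norm_eq_abs] at hCx ⊢
  exact abs_le.2 ⟨by linarith [le_max_right C D], by linarith [le_max_left C D]⟩

lemma hasSlope_runMin (hξ : HasSlope ξ c) (hc : c ≤ 0) : HasSlope (runMin ξ) c := by
  by_cases hbdd : BddBelow (ξ '' Set.Iic 0)
  · exact hξ.hasSlope_runMin_of_bddBelow hc hbdd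
  · have hc0 : c = 0 := hc.eq_of_not_lt fun hneg => hbdd (hξ.bddBelow_image_Iic hneg 0)
    have hrun (x : ℤ) : runMin ξ x = 0 :=
      Int.csInf_of_not_bddBelow (mt (bddBelow_image_Iic_iff ξ x 0).1 hbdd)
    simp [HasSlope, hc0, hrun]

lemma hasSlope_liftT (hξ : HasSlope ξ c) (hc : c ≤ 0) : HasSlope (liftT ξ) c := by
  refine (((hξ.hasSlope_runMin hc).const_mul_left 2).sub hξ).congr_left fun x => ?_
  simp only [liftT]
  push_cast
  ring

end HasSlope

lemma hasSlope_iff_natCast {ξ : ℤ → ℤ} {c : ℝ} :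
    HasSlope ξ c ↔
      (fun n : ℕ => (ξ (-n) : ℝ) + c * n) =o[atTop] (fun n : ℕ => (n : ℝ)) ∧
      (fun n : ℕ => (ξ n : ℝ) - c * n) =o[atTop] (fun n : ℕ => (n : ℝ)) := by
  have hbot : (atBot : Filter ℤ) = map (fun n : ℕ => -(n : ℤ)) atTop := by
    rw [← map_neg_atTop, ← Nat.map_cast_int_atTop, Filter.map_map]
    rfl
  rw [HasSlope, Int.cofinite_eq, isLittleO_sup, hbot, ← Nat.map_cast_int_atTop, isLittleO_map,
    isLittleO_map]
  simp [Function.comp_def]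

lemma valR_eq_intCast (b : Bool) : valR b = (valZ b : ℝ) := by
  cases b <;> simp [valR, valZ]

lemma isLift_xi0 (η : Cfg) : IsLift η (xi0 η) := by
  intro x
  rcases lt_trichotomy x 0 with hx | rfl | hx
  · have hIcc : insert x (Finset.Icc (x + 1) 0) = Finset.Icc x 0 :=
      Finset.insert_Icc_add_one_left_eq_Icc hx.le
    simp only [xi0, if_neg hx.not_ge, if_neg (show ¬0 ≤ x - 1 by omega), sub_add_cancel]
    rw [← hIcc, Finset.sum_insert (by simp)]
    ring
  · simp [xi0]
  · have hIcc : insert x (Finset.Icc 1 (x - 1)) = Finset.Icc 1 x :=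
      Finset.insert_Icc_sub_one_right_eq_Icc (by omega)
    simp only [xi0, if_pos hx.le, if_pos (show 0 ≤ x - 1 by omega)]
    rw [← hIcc, Finset.sum_insert (by simp)]
    ring

namespace IsLift

variable {η : Cfg} {ξ : ℤ → ℤ}

lemma two_mul_sum_Icc_valZ (hξ : IsLift η ξ) {z x : ℤ} (hzx : z - 1 ≤ x) :
    2 * ∑ y ∈ Finset.Icc z x, valZ (η y) = ξ x - ξ (z - 1) + (x - (z - 1)) := by
  induction x, hzx using Int.leInduction with
  | base => simp
  | succ x hx ih =>
    have hstep := hξ (x + 1)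
    rw [add_sub_cancel_right] at hstep
    rw [← Finset.insert_Icc_right_eq_Icc_add_one (by omega), Finset.sum_insert (by simp)]
    linarith

lemma two_mul_sum_Icc_valR (hξ : IsLift η ξ) {z x : ℤ} (hzx : z - 1 ≤ x) :
    2 * ∑ y ∈ Finset.Icc z x, valR (η y) = ξ x - ξ (z - 1) + (x - (z - 1)) := by
  simp_rw [valR_eq_intCast]
  exact_mod_cast hξ.two_mul_sum_Icc_valZ hzx

lemma abs_sub_le_one (hξ : IsLift η ξ) (x : ℤ) : |ξ x - ξ (x - 1)| ≤ 1 := by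
  rw [hξ x]
  cases η x <;> simp [valZ]

lemma tendsto_rightDensity_iff_isLittleO (hξ : IsLift η ξ) {lam : ℝ} :
    Tendsto (fun n : ℕ => (∑ x ∈ Finset.Icc (0 : ℤ) n, valR (η x)) / (n : ℝ)) atTop (𝓝 lam) ↔
      (fun n : ℕ => (ξ n : ℝ) - (2 * lam - 1) * n) =o[atTop] (fun n : ℕ => (n : ℝ)) := by
  rw [tendsto_div_iff_isLittleO ((eventually_gt_atTop 0).mono fun n hn => by positivity),
    ← isLittleO_const_mul_left_iff (two_ne_zero (α := ℝ))]
  refine isLittleO_congr_of_norm_sub_le (B := ‖1 - (ξ (-1) : ℝ)‖) tendsto_norm_natCast_atTop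
    fun n => le_of_eq (congrArg _ ?_)
  have hsum := hξ.two_mul_sum_Icc_valR (z := 0) (x := n) (by omega)
  push_cast [zero_sub] at hsum
  linarith

lemma tendsto_leftDensity_iff_isLittleO (hξ : IsLift η ξ) {lam : ℝ} :
    Tendsto (fun n : ℕ => (∑ x ∈ Finset.Icc (-(n : ℤ)) 0, valR (η x)) / (n : ℝ)) atTop (𝓝 lam) ↔
      (fun n : ℕ => (ξ (-n) : ℝ) + (2 * lam - 1) * n) =o[atTop] (fun n : ℕ => (n : ℝ)) := by
  rw [tendsto_div_iff_isLittleO ((eventually_gt_atTop 0).mono fun n hn => by positivity),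
    ← isLittleO_const_mul_left_iff (two_ne_zero (α := ℝ)), ← isLittleO_neg_left (f' := fun n : ℕ =>
      (ξ (-n) : ℝ) + (2 * lam - 1) * n)]
  refine isLittleO_congr_of_norm_sub_le (B := ‖(ξ 0 : ℝ) + 1‖ + 1) tendsto_norm_natCast_atTop
    fun n => ?_
  have hsum := hξ.two_mul_sum_Icc_valR (z := -n) (x := 0) (by omega)
  have hstep : ‖(ξ (-n) : ℝ) - ξ (-n - 1)‖ ≤ 1 := by
    rw [Real.norm_eq_abs]
    exact_mod_cast hξ.abs_sub_le_one (-n)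
  calc ‖_‖ = ‖((ξ 0 : ℝ) + 1) + ((ξ (-n) : ℝ) - ξ (-n - 1))‖ := by
        push_cast at hsum
        congr 1
        linarith
    _ ≤ ‖(ξ 0 : ℝ) + 1‖ + 1 := (norm_add_le _ _).trans (by gcongr)

lemma inXlam_iff_hasSlope (hξ : IsLift η ξ) {lam : ℝ} :
    inXlam lam η ↔ HasSlope ξ (2 * lam - 1) := by
  rw [inXlam, hξ.tendsto_leftDensity_iff_isLittleO, hξ.tendsto_rightDensity_iff_isLittleO,
    hasSlope_iff_natCast]

lemma isRecord_iff (hξ : IsLift η ξ) {x : ℤ} : isRecord η x ↔ ∀ z < x, ξ x < ξ z := by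
  have balance {z : ℤ} (hz : z ≤ x) :
      ∑ y ∈ Finset.Icc z x, valZ (η y) < ∑ y ∈ Finset.Icc z x, (1 - valZ (η y)) ↔
        ξ x < ξ (z - 1) := by
    have hsum := hξ.two_mul_sum_Icc_valZ (z := z) (x := x) (by omega)
    rw [Finset.sum_sub_distrib, Finset.sum_const, Int.card_Icc, nsmul_one,
      Int.toNat_of_nonneg (by omega)]
    omega
  refine ⟨fun h z hz => ?_, fun h z hz => (balance hz).2 (h (z - 1) (by omega))⟩
  simpa using (balance (z := z + 1) hz).1 (h (z + 1) hz)

lemma sub_eq_neg_one_of_isRecord (hξ : IsLift η ξ) {x : ℤ} (hx : isRecord η x) :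
    ξ x - ξ (x - 1) = -1 := by
  have hlt := hξ.isRecord_iff.1 hx (x - 1) (by omega)
  have habs := abs_le.1 (hξ.abs_sub_le_one x)
  omega

lemma runMin_eq_of_isRecord (hξ : IsLift η ξ) {x : ℤ} (hx : isRecord η x) :
    runMin ξ x = ξ x := by
  refine IsLeast.csInf_eq ⟨⟨x, Set.self_mem_Iic, rfl⟩, ?_⟩
  rintro _ ⟨z, hz, rfl⟩
  rcases (Set.mem_Iic.1 hz).eq_or_lt with rfl | hlt
  · exact le_rfl
  · exact (hξ.isRecord_iff.1 hx z hlt).le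

lemma runMin_sub_one_eq_of_isRecord (hξ : IsLift η ξ) {x : ℤ} (hx : isRecord η x) :
    runMin ξ (x - 1) = ξ (x - 1) := by
  refine IsLeast.csInf_eq ⟨⟨x - 1, Set.self_mem_Iic, rfl⟩, ?_⟩
  rintro _ ⟨z, hz, rfl⟩
  have hlt := hξ.isRecord_iff.1 hx z (by rw [Set.mem_Iic] at hz; omega)
  have hstep := hξ.sub_eq_neg_one_of_isRecord hx
  omega

lemma runMin_sub_one_eq_of_not_isRecord (hξ : IsLift η ξ) {x : ℤ} (hx : ¬isRecord η x) :
    runMin ξ (x - 1) = runMin ξ x := by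
  obtain ⟨z, hzx, hz⟩ : ∃ z < x, ξ z ≤ ξ x := by
    simpa [hξ.isRecord_iff] using hx
  refine csInf_eq_csInf_of_forall_exists_le ?_ ?_
  · rintro _ ⟨y, hy, rfl⟩
    exact ⟨ξ y, ⟨y, by rw [Set.mem_Iic] at *; omega, rfl⟩, le_rfl⟩
  · rintro _ ⟨y, hy, rfl⟩
    rcases (Set.mem_Iic.1 hy).eq_or_lt with rfl | hlt
    · exact ⟨ξ z, ⟨z, by rw [Set.mem_Iic]; omega, rfl⟩, hz⟩
    · exact ⟨ξ y, ⟨y, by rw [Set.mem_Iic]; omega, rfl⟩, le_rfl⟩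

/-- The junk value of `runMin` is harmless: if `ξ` is unbounded below on the left, then `η` has no
records, so `bbsT` exchanges balls and empty boxes, while `runMin ξ = 0` gives `liftT ξ = -ξ`. -/
lemma isLift_bbsT_liftT (hξ : IsLift η ξ) : IsLift (bbsT η) (liftT ξ) := by
  intro x
  by_cases hx : isRecord η x
  · have hdown := hξ.sub_eq_neg_one_of_isRecord hx
    simp only [liftT, bbsT, if_pos hx, hξ.runMin_eq_of_isRecord hx,
      hξ.runMin_sub_one_eq_of_isRecord hx, valZ, Bool.false_eq_true, if_false]
    linarith
  · have hstep := hξ x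
    have hflip : valZ (!η x) = 1 - valZ (η x) := by cases η x <;> rfl
    simp only [liftT, bbsT, if_neg hx, hξ.runMin_sub_one_eq_of_not_isRecord hx, hflip]
    linarith

end IsLift

theorem density_conservation_general {lam : ℝ} (hlam : lam ≤ 1 / 2) {η : Cfg}
    (hη : inXlam lam η) : inXlam lam (bbsT η) := by
  have hlift : IsLift η (xi0 η) := isLift_xi0 η
  have hslope : HasSlope (xi0 η) (2 * lam - 1) := hlift.inXlam_iff_hasSlope.1 hη
  exact hlift.isLift_bbsT_liftT.inXlam_iff_hasSlope.2 (hslope.hasSlope_liftT (by linarith))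

/-- Let `0 ≤ λ < 1/2` and `η ∈ 𝒳_λ`.  Then `Tη ∈ 𝒳_λ`: the
box-ball operator preserves the asymptotic density of balls on both half lines. -/
theorem density_conservation (lam : ℝ) (h0 : 0 ≤ lam) (h1 : lam < 1 / 2)
    (η : Cfg) (hη : inXlam lam η) : inXlam lam (bbsT η) :=
  density_conservation_general h1.le hη
end

section
/- Let η be a ball configuration and let ξ be a walk lift of η such that min_{y≤x} ξ(y) > −∞ for every x ∈ ℤ. Define Tξ(x) := 2·min_{y≤x} ξ(y) − ξ(x). Then Tξ is a walk lift of Tη, that is, Tξ(x) − Tξ(x−1) = 2·(Tη)(x) − 1 for all x ∈ ℤ (reflecting the walk at its running minimum implements the box-ball dynamics). -/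
open MeasureTheory Filter Finset

/-!
The partial sum of `2η - 1` over `[z, x]` telescopes to `ξ x - ξ (z - 1)`, so `x` is a record
exactly when `ξ x` lies strictly below the running minimum `M (x - 1)`. Since `ξ` has unit steps,
`M` then drops by exactly one at a record and is constant elsewhere. Hence `2 M - ξ` has the steps
of `-ξ` (balls and empty boxes exchanged), lowered by `2` at each record: there the step `+1` of
`-ξ` becomes `-1`, which keeps the record empty.
-/

theorem sum_Icc_sub_sub_one {G : Type*} [AddCommGroup G] (f : ℤ → G) {a b : ℤ} (h : a ≤ b) :
    ∑ x ∈ Icc a b, (f x - f (x - 1)) = f b - f (a - 1) := by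
  induction b, h using Int.leInduction with
  | base => simp
  | succ b hab ih =>
    rw [← insert_Icc_right_eq_Icc_add_one (hab.trans (by simp)), sum_insert (by simp), ih,
      add_sub_cancel_right, sub_add_sub_cancel]

@[simp]
theorem valZ_true : valZ true = 1 := rfl

@[simp]
theorem valZ_false : valZ false = 0 := rfl

theorem valZ_not (b : Bool) : valZ (!b) = 1 - valZ b := by
  cases b <;> rfl

section Record

variable {η : Cfg} {x : ℤ}

theorem isRecord_iff_sum_neg :
    isRecord η x ↔ ∀ z ≤ x, ∑ y ∈ Icc z x, (2 * valZ (η y) - 1) < 0 := by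
  refine forall₂_congr fun z _ ↦ ?_
  rw [← sub_neg, ← sum_sub_distrib]
  simp only [sub_sub_eq_add_sub, ← two_mul]

theorem eq_false_of_isRecord (h : isRecord η x) : η x = false := by
  have hstep : 2 * valZ (η x) - 1 < 0 := by simpa using isRecord_iff_sum_neg.mp h x le_rfl
  cases hx : η x
  · rfl
  · simp [hx] at hstep

theorem bbsT_of_isRecord (h : isRecord η x) : bbsT η x = false :=
  if_pos h

theorem bbsT_of_not_isRecord (h : ¬ isRecord η x) : bbsT η x = !(η x) :=
  if_neg h

end Record

section RunMin

variable {ξ : ℤ → ℤ} {x : ℤ}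

theorem runMin_le (h : BddBelow (ξ '' Set.Iic x)) : runMin ξ x ≤ ξ x :=
  csInf_le h (Set.mem_image_of_mem ξ Set.self_mem_Iic)

theorem lt_runMin_iff (h : BddBelow (ξ '' Set.Iic x)) {m : ℤ} :
    m < runMin ξ x ↔ ∀ y ≤ x, m < ξ y := by
  simp only [← Int.add_one_le_iff, runMin, le_csInf_iff h (Set.nonempty_Iic.image ξ),
    Set.forall_mem_image, Set.mem_Iic]

theorem runMin_eq_min (h : BddBelow (ξ '' Set.Iic (x - 1))) :
    runMin ξ x = min (ξ x) (runMin ξ (x - 1)) := by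
  have hIic : Set.Iic x = insert x (Set.Iic (x - 1)) := by
    rw [Set.Iic_sub_one_eq_Iio, Set.Iio_insert]
  rw [runMin, hIic, Set.image_insert_eq, csInf_insert h (Set.nonempty_Iic.image ξ), runMin]

end RunMin

namespace IsLift

variable {η : Cfg} {ξ : ℤ → ℤ} {x : ℤ}

theorem sum_Icc (hξ : IsLift η ξ) {z : ℤ} (hzx : z ≤ x) :
    ∑ y ∈ Icc z x, (2 * valZ (η y) - 1) = ξ x - ξ (z - 1) := by
  simp only [← hξ _, sum_Icc_sub_sub_one ξ hzx]

theorem isRecord_iff_lt_runMin (hξ : IsLift η ξ) (hbdd : BddBelow (ξ '' Set.Iic (x - 1))) :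
    isRecord η x ↔ ξ x < runMin ξ (x - 1) := by
  rw [isRecord_iff_sum_neg, lt_runMin_iff hbdd]
  constructor
  · intro h y hy
    have hneg := h (y + 1) (by lia)
    rwa [hξ.sum_Icc (by lia), add_sub_cancel_right, sub_neg] at hneg
  · intro h z hz
    rw [hξ.sum_Icc hz, sub_neg]
    exact h (z - 1) (by lia)

theorem runMin_of_isRecord (hξ : IsLift η ξ) (hbdd : BddBelow (ξ '' Set.Iic (x - 1)))
    (h : isRecord η x) : runMin ξ x = runMin ξ (x - 1) - 1 := by
  have hstep : ξ x - ξ (x - 1) = -1 := by simpa [eq_false_of_isRecord h] using hξ x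
  have hlt : ξ x < runMin ξ (x - 1) := (hξ.isRecord_iff_lt_runMin hbdd).mp h
  have hle : runMin ξ (x - 1) ≤ ξ (x - 1) := runMin_le hbdd
  rw [runMin_eq_min hbdd, min_eq_left hlt.le]
  lia

theorem runMin_of_not_isRecord (hξ : IsLift η ξ) (hbdd : BddBelow (ξ '' Set.Iic (x - 1)))
    (h : ¬ isRecord η x) : runMin ξ x = runMin ξ (x - 1) := by
  rw [hξ.isRecord_iff_lt_runMin hbdd, not_lt] at h
  rw [runMin_eq_min hbdd, min_eq_right h]

end IsLift

/-- If `ξ` is a walk lift of `η` whose running minimum is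
finite (`min_{y≤x} ξ(y) > -∞`, i.e. `{ξ(y) : y ≤ x}` is bounded below, for every
`x`), then `Tξ(x) := 2·min_{y≤x} ξ(y) − ξ(x)` is a walk lift of `Tη`:
reflecting the walk at its running minimum implements the box-ball dynamics. -/
theorem liftT_is_lift_of_bbsT (η : Cfg) (ξ : ℤ → ℤ) (hlift : IsLift η ξ)
    (hbdd : ∀ x : ℤ, BddBelow (ξ '' Set.Iic x)) :
    IsLift (bbsT η) (liftT ξ) := by
  intro x
  have hstep := hlift x
  simp only [liftT]
  by_cases hx : isRecord η x
  · rw [hlift.runMin_of_isRecord (hbdd _) hx, bbsT_of_isRecord hx]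
    rw [eq_false_of_isRecord hx] at hstep
    rw [valZ_false] at hstep ⊢
    linarith
  · rw [hlift.runMin_of_not_isRecord (hbdd _) hx, bbsT_of_not_isRecord hx, valZ_not]
    linarith
end

section
/- For 0 < λ < 1/2, let ν_λ := Bernoulli(λ)^{⊗ℤ} be the product measure on {0,1}^ℤ under which the coordinates are i.i.d. with ν_λ(η(x) = 1) = λ. Then ν_λ is T-invariant: the pushforward of ν_λ under the box-ball operator T equals ν_λ. -/
open MeasureTheory Filter Finset

open MeasureTheory in
/-- `ν` is the Bernoulli(`lam`) product measure on `{0,1}^ℤ`: a probability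
measure under which the coordinates are i.i.d. with `ν(η(x) = 1) = lam`;
equivalently, the measure of every finite cylinder is the corresponding product.
(This property characterizes `Bernoulli(lam)^{⊗ℤ}` uniquely.) -/
def IsBernoulliProduct (lam : ℝ) (ν : Measure Cfg) : Prop :=
  IsProbabilityMeasure ν ∧
  ∀ (s : Finset ℤ) (f : ℤ → Bool),
    ν {η : Cfg | ∀ x ∈ s, η x = f x} =
      ∏ x ∈ s, (if f x then ENNReal.ofReal lam else ENNReal.ofReal (1 - lam))

/-!
A carrier coming from `-∞` picks up every ball it meets and drops one, if it has any, at every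
empty box. The records are the empty boxes that it reaches with no load, so `T η` has its balls
exactly where the carrier drops one. Under a Bernoulli product measure of parameter `lam`, the load
after passing `x` is at least `k` with the probability that a walk stepping up with probability
`lam` ever climbs `k` levels; hence it is geometric, with ratio `r = min 1 (lam / (1 - lam))`.

Passing a box turns the load before it and its content into the load after it and its new content.
As in Burke's theorem for queues, a geometric load of ratio `r` makes the new load and the new
content independent, the former again geometric and the latter a ball with probability
`(1 - lam) * r = min lam (1 - lam)`. Hence the load after passing `x` stays independent of the
values of `T η` up to `x`, and these are i.i.d.; for `lam < 1 / 2` their parameter is `lam` again.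
-/

namespace BoxBall

open ProbabilityTheory

section Preliminaries

lemma measureReal_eq_add_of_bool {Ω : Type*} [MeasurableSpace Ω] (μ : Measure Ω)
    [IsFiniteMeasure μ] {g : Ω → Bool} (hg : Measurable g) (A : Set Ω) :
    μ.real A = μ.real (A ∩ {ω | g ω = true}) + μ.real (A ∩ {ω | g ω = false}) := by
  rw [← measureReal_inter_add_sdiff (s := A) (hg (measurableSet_singleton true))]
  congr 3
  ext ω
  simp

lemma generateFrom_range_singleton (α : Type*) [m : MeasurableSpace α] [Countable α]
    [MeasurableSingletonClass α] :
    MeasurableSpace.generateFrom (Set.range fun a : α ↦ ({a} : Set α)) = m := by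
  refine le_antisymm (MeasurableSpace.generateFrom_le ?_) fun t _ ↦ ?_
  · rintro _ ⟨a, rfl⟩
    exact measurableSet_singleton a
  · rw [← Set.biUnion_of_singleton t]
    exact MeasurableSet.biUnion t.to_countable fun a _ ↦
      MeasurableSpace.measurableSet_generateFrom ⟨a, rfl⟩

lemma iIndepFun_of_measure_iInter_preimage_singleton {Ω ι : Type*} {X : ι → Type*}
    [MeasurableSpace Ω] [∀ i, MeasurableSpace (X i)] [∀ i, Countable (X i)]
    [∀ i, MeasurableSingletonClass (X i)] [∀ i, Nonempty (X i)] {Y : ∀ i, Ω → X i} {μ : Measure Ω}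
    (hY : ∀ i, Measurable (Y i))
    (h : ∀ (s : Finset ι) (f : ∀ i, X i),
      μ (⋂ i ∈ s, Y i ⁻¹' {f i}) = ∏ i ∈ s, μ (Y i ⁻¹' {f i})) :
    iIndepFun Y μ := by
  refine iIndepSets.iIndep (fun i ↦ (hY i).comap_le)
    (fun i ↦ Set.range fun a ↦ Y i ⁻¹' {a}) (fun i ↦ ?_) (fun i ↦ ?_) ?_
  · rintro _ ⟨a, rfl⟩ _ ⟨b, rfl⟩ ⟨ω, rfl, hb⟩
    obtain rfl : Y i ω = b := hb
    exact ⟨Y i ω, (Set.inter_self _).symm⟩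
  · conv_lhs => rw [← generateFrom_range_singleton (X i), MeasurableSpace.comap_generateFrom]
    rw [← Set.range_comp, Function.comp_def]
  · refine (iIndepSets_iff _ _).2 fun s A hA ↦ ?_
    choose! f hf using hA
    rw [← Finset.prod_congr rfl fun i hi ↦ congrArg μ (hf i hi), ← h s f]
    exact congrArg μ (Set.iInter₂_congr fun i hi ↦ (hf i hi).symm)

lemma indep_cylinderEvents_of_disjoint {ι : Type*} {X : ι → Type*} [∀ i, MeasurableSpace (X i)]
    {μ : Measure (∀ i, X i)} (h : iIndepFun (fun i (η : ∀ i, X i) ↦ η i) μ) {S T : Set ι}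
    (hST : Disjoint S T) : Indep (cylinderEvents S) (cylinderEvents T) μ :=
  indep_iSup_of_disjoint (fun i ↦ (measurable_pi_apply i).comap_le) h.iIndep hST

end Preliminaries

section Carrier

variable {η : Cfg} {x : ℤ}

/-- The load of the carrier just after it has passed `x`, if it entered empty at `x - N + 1`:
it picks up every ball it meets and drops one, if it has any, at every empty box. -/
def carrier : ℕ → Cfg → ℤ → ℕ
  | 0, _, _ => 0
  | N + 1, η, x => if η x then carrier N η (x - 1) + 1 else carrier N η (x - 1) - 1

/-- The event that the carrier coming from `-∞` holds at least `k` balls after passing `x`; its load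
is the supremum of the loads `carrier N η x`, and may be infinite. -/
def loadGE (x : ℤ) (k : ℕ) : Set Cfg := {η | ∃ N, k ≤ carrier N η x}

/-- The number of balls minus the number of empty boxes in `[z, x]`. -/
noncomputable def excess (η : Cfg) (z x : ℤ) : ℤ := ∑ y ∈ Icc z x, (2 * valZ (η y) - 1)

lemma carrier_le_carrier_succ (N : ℕ) (η : Cfg) (x : ℤ) :
    carrier N η x ≤ carrier (N + 1) η x := by
  induction N generalizing x with
  | zero => exact Nat.zero_le _
  | succ N ih =>
    have := ih (x - 1)
    rw [carrier, carrier]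
    split_ifs <;> omega

lemma loadGE_zero (x : ℤ) : loadGE x 0 = Set.univ :=
  Set.eq_univ_of_forall fun _ ↦ ⟨0, Nat.zero_le _⟩

lemma loadGE_antitone (x : ℤ) : Antitone (loadGE x) :=
  fun _ _ hjk _ ⟨N, hN⟩ ↦ ⟨N, hjk.trans hN⟩

lemma succ_le_carrier_succ_of_true {N k : ℕ} (hx : η x = true) :
    k + 1 ≤ carrier (N + 1) η x ↔ k ≤ carrier N η (x - 1) := by
  rw [carrier, if_pos hx, Nat.add_le_add_iff_right]

lemma succ_le_carrier_succ_of_false {N k : ℕ} (hx : η x = false) :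
    k + 1 ≤ carrier (N + 1) η x ↔ k + 2 ≤ carrier N η (x - 1) := by
  rw [carrier, if_neg (by simp [hx])]
  omega

lemma mem_loadGE_succ {k : ℕ} : η ∈ loadGE x (k + 1) ↔ ∃ N, k + 1 ≤ carrier (N + 1) η x :=
  ⟨fun ⟨N, hN⟩ ↦ ⟨N, hN.trans (carrier_le_carrier_succ N η x)⟩, fun ⟨N, hN⟩ ↦ ⟨N + 1, hN⟩⟩

lemma mem_loadGE_succ_of_true {k : ℕ} (hx : η x = true) :
    η ∈ loadGE x (k + 1) ↔ η ∈ loadGE (x - 1) k :=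
  mem_loadGE_succ.trans (exists_congr fun _ ↦ succ_le_carrier_succ_of_true hx)

lemma mem_loadGE_succ_of_false {k : ℕ} (hx : η x = false) :
    η ∈ loadGE x (k + 1) ↔ η ∈ loadGE (x - 1) (k + 2) :=
  mem_loadGE_succ.trans (exists_congr fun _ ↦ succ_le_carrier_succ_of_false hx)

lemma excess_of_lt {z : ℤ} (h : x < z) : excess η z x = 0 := by
  rw [excess, Icc_eq_empty_of_lt h, sum_empty]

lemma excess_eq_sub_one_add {z : ℤ} (h : z ≤ x) :
    excess η z x = excess η z (x - 1) + if η x then 1 else -1 := by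
  rw [excess, ← insert_Icc_sub_one_right_eq_Icc h, sum_insert (by simp), add_comm, excess, valZ]
  split_ifs <;> rfl

lemma isRecord_iff_excess_neg : isRecord η x ↔ ∀ z ≤ x, excess η z x < 0 := by
  refine forall₂_congr fun z _ ↦ ?_
  rw [← sub_neg, ← sum_sub_distrib, excess]
  simp only [two_mul, sub_sub_eq_add_sub, add_sub_right_comm]

lemma exists_carrier_eq_excess (N : ℕ) (η : Cfg) (x : ℤ) :
    ∃ z ≤ x + 1, (carrier N η x : ℤ) = excess η z x := by
  induction N generalizing x with
  | zero => exact ⟨x + 1, le_rfl, (excess_of_lt (lt_add_one x)).symm⟩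
  | succ N ih =>
    obtain ⟨z, hz, h⟩ := ih (x - 1)
    have hz' : z ≤ x := by omega
    by_cases hempty : η x = false ∧ carrier N η (x - 1) = 0
    · exact ⟨x + 1, le_rfl, by simp [carrier, hempty, excess_of_lt]⟩
    · refine ⟨z, by omega, ?_⟩
      rw [excess_eq_sub_one_add hz', ← h, carrier]
      split_ifs <;> grind

lemma excess_le_carrier (N : ℕ) (η : Cfg) (x : ℤ) :
    excess η (x - N + 1) x ≤ carrier N η x := by
  induction N generalizing x with
  | zero => simp [excess_of_lt, carrier]
  | succ N ih =>
    have h := ih (x - 1)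
    rw [show x - 1 - (N : ℤ) + 1 = x - (N + 1 : ℕ) + 1 by push_cast; ring] at h
    rw [excess_eq_sub_one_add (by push_cast; omega), carrier]
    split_ifs <;> omega

lemma isRecord_iff : isRecord η x ↔ η x = false ∧ η ∉ loadGE (x - 1) 1 := by
  rw [isRecord_iff_excess_neg]
  constructor
  · intro h
    have hx : η x = false := by
      have := h x le_rfl
      rw [excess_eq_sub_one_add le_rfl, excess_of_lt (sub_one_lt x)] at this
      by_contra hc
      simp [Bool.eq_true_of_not_eq_false hc] at this
    refine ⟨hx, fun ⟨N, hN⟩ ↦ ?_⟩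
    obtain ⟨z, hz, hNz⟩ := exists_carrier_eq_excess N η (x - 1)
    have := h z (by omega)
    rw [excess_eq_sub_one_add (by omega), ← hNz, hx, if_neg Bool.false_ne_true] at this
    omega
  · rintro ⟨hx, hload⟩ z hz
    obtain ⟨N, hN⟩ := Int.eq_ofNat_of_zero_le (sub_nonneg.2 hz)
    have hle := excess_le_carrier N η (x - 1)
    rw [show x - 1 - (N : ℤ) + 1 = z by omega] at hle
    have hzero : carrier N η (x - 1) = 0 := by
      by_contra hc
      exact hload ⟨N, by omega⟩
    rw [excess_eq_sub_one_add hz, hx, if_neg Bool.false_ne_true]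
    omega

lemma bbsT_eq_true_iff : bbsT η x = true ↔ η x = false ∧ η ∈ loadGE (x - 1) 1 := by
  rw [bbsT]
  split_ifs with h <;> rw [isRecord_iff] at h
  · simp [h.1, h.2]
  · cases hx : η x <;> simp_all

lemma mem_loadGE_and_bbsT_eq_true_iff {k : ℕ} :
    η ∈ loadGE x k ∧ bbsT η x = true ↔ η ∈ loadGE (x - 1) (k + 1) ∧ η x = false := by
  rw [bbsT_eq_true_iff]
  have hanti : η ∈ loadGE (x - 1) (k + 1) → η ∈ loadGE (x - 1) 1 :=
    fun h ↦ loadGE_antitone _ (by omega) h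
  cases k with
  | zero => simp [loadGE_zero, and_comm]
  | succ k =>
    constructor
    · rintro ⟨hk, hx, -⟩
      exact ⟨(mem_loadGE_succ_of_false hx).1 hk, hx⟩
    · rintro ⟨hk, hx⟩
      exact ⟨(mem_loadGE_succ_of_false hx).2 hk, hx, hanti hk⟩

lemma mem_loadGE_succ_and_bbsT_eq_false_iff {k : ℕ} :
    η ∈ loadGE x (k + 1) ∧ bbsT η x = false ↔ η ∈ loadGE (x - 1) k ∧ η x = true := by
  rw [← Bool.not_eq_true, bbsT_eq_true_iff]
  cases hx : η x
  · have hanti : η ∈ loadGE (x - 1) (k + 2) → η ∈ loadGE (x - 1) 1 :=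
      fun h ↦ loadGE_antitone _ (by omega) h
    simpa [mem_loadGE_succ_of_false hx] using hanti
  · simp [mem_loadGE_succ_of_true hx]

end Carrier

section Measurability

/-- The σ-algebra generated by the boxes up to and including `x`. -/
abbrev past (x : ℤ) : MeasurableSpace Cfg := cylinderEvents (Set.Iic x)

lemma past_le (x : ℤ) : past x ≤ MeasurableSpace.pi := cylinderEvents_le_pi

lemma past_mono : Monotone past := fun _ _ hxy ↦ cylinderEvents_mono (Set.Iic_subset_Iic.2 hxy)

lemma measurable_apply_past {x y : ℤ} (h : x ≤ y) : Measurable[past y] fun η : Cfg ↦ η x :=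
  measurable_cylinderEvent_apply h

lemma measurable_carrier (N : ℕ) (x : ℤ) : Measurable[past x] fun η ↦ carrier N η x := by
  induction N generalizing x with
  | zero => exact measurable_const
  | succ N ih =>
    have hprev := (ih (x - 1)).mono (past_mono (sub_one_lt x).le) le_rfl
    exact Measurable.ite (measurable_apply_past le_rfl (measurableSet_singleton true))
      (hprev.add_const 1) ((measurable_from_top (f := fun n : ℕ ↦ n - 1)).comp hprev)

lemma measurableSet_loadGE (x : ℤ) (k : ℕ) : MeasurableSet[past x] (loadGE x k) := by
  simp only [loadGE, Set.ofPred_exists]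
  exact MeasurableSet.iUnion fun N ↦ measurable_carrier N x measurableSet_Ici

lemma measurable_bbsT_apply (x : ℤ) : Measurable[past x] fun η ↦ bbsT η x := by
  refine @measurable_to_bool _ (past x) _ ?_
  have : (fun η ↦ bbsT η x) ⁻¹' {true} = {η | η x = false} ∩ loadGE (x - 1) 1 :=
    Set.ext fun _ ↦ bbsT_eq_true_iff
  rw [this]
  exact (measurable_apply_past le_rfl (measurableSet_singleton false)).inter
    (past_mono (sub_one_lt x).le _ (measurableSet_loadGE _ _))

lemma measurable_bbsT : Measurable bbsT :=
  measurable_pi_iff.2 fun x ↦ (measurable_bbsT_apply x).mono (past_le x) le_rfl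

end Measurability

section GamblersRuin

/-- The probability that a walk with steps `+1` and `-1`, taken with probabilities `lam` and
`1 - lam`, climbs `k` levels within `N` steps. -/
noncomputable def hitProb (lam : ℝ) : ℕ → ℕ → ℝ
  | _, 0 => 1
  | 0, _ + 1 => 0
  | N + 1, k + 1 => lam * hitProb lam N k + (1 - lam) * hitProb lam N (k + 2)

/-- The probability that the walk of `hitProb` ever climbs one level: `lam / (1 - lam)` for
`lam ≤ 1 / 2`, and `1` otherwise. -/
noncomputable def hitRatio (lam : ℝ) : ℝ := lam / max lam (1 - lam)

variable {lam : ℝ}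

lemma max_self_one_sub_pos (lam : ℝ) : 0 < max lam (1 - lam) := by
  rcases le_or_gt lam 0 with h | h
  · exact lt_max_of_lt_right (by linarith)
  · exact lt_max_of_lt_left h

lemma hitRatio_nonneg (h : 0 ≤ lam) : 0 ≤ hitRatio lam := div_nonneg h (max_self_one_sub_pos lam).le

lemma hitRatio_le_one (lam : ℝ) : hitRatio lam ≤ 1 :=
  div_le_one_of_le₀ (le_max_left _ _) (max_self_one_sub_pos lam).le

lemma max_mul_hitRatio (lam : ℝ) : max lam (1 - lam) * hitRatio lam = lam :=
  mul_div_cancel₀ lam (max_self_one_sub_pos lam).ne'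

lemma one_sub_mul_hitRatio (lam : ℝ) : (1 - lam) * hitRatio lam = min lam (1 - lam) := by
  rw [hitRatio, mul_div_assoc', div_eq_iff (max_self_one_sub_pos lam).ne', min_mul_max, mul_comm]

lemma one_sub_min_mul_hitRatio (lam : ℝ) : (1 - min lam (1 - lam)) * hitRatio lam = lam := by
  have h : 1 - min lam (1 - lam) = max lam (1 - lam) := by
    linarith [min_add_max lam (1 - lam)]
  rw [h, max_mul_hitRatio]

lemma hitRatio_fixed_point (lam : ℝ) : lam + (1 - lam) * hitRatio lam ^ 2 = hitRatio lam := by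
  linear_combination hitRatio lam * one_sub_mul_hitRatio lam - one_sub_min_mul_hitRatio lam

lemma hitProb_nonneg (hlam : lam ∈ Set.Icc 0 1) (N k : ℕ) : 0 ≤ hitProb lam N k := by
  fun_induction hitProb lam N k with
  | case1 => exact zero_le_one
  | case2 => exact le_rfl
  | case3 N k ih₁ ih₂ =>
    exact add_nonneg (mul_nonneg hlam.1 ih₁) (mul_nonneg (sub_nonneg.2 hlam.2) ih₂)

lemma hitProb_le_pow (hlam : lam ∈ Set.Icc 0 1) (N k : ℕ) :
    hitProb lam N k ≤ hitRatio lam ^ k := by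
  fun_induction hitProb lam N k with
  | case1 => exact (pow_zero _).ge
  | case2 => exact pow_nonneg (hitRatio_nonneg hlam.1) _
  | case3 N k ih₁ ih₂ =>
    calc lam * hitProb lam N k + (1 - lam) * hitProb lam N (k + 2)
        ≤ lam * hitRatio lam ^ k + (1 - lam) * hitRatio lam ^ (k + 2) :=
          add_le_add (mul_le_mul_of_nonneg_left ih₁ hlam.1)
            (mul_le_mul_of_nonneg_left ih₂ (sub_nonneg.2 hlam.2))
      _ = hitRatio lam ^ (k + 1) := by
          linear_combination hitRatio lam ^ k * hitRatio_fixed_point lam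

lemma hitProb_mono (hlam : lam ∈ Set.Icc 0 1) (k : ℕ) : Monotone fun N ↦ hitProb lam N k := by
  refine monotone_nat_of_le_succ fun N ↦ ?_
  fun_induction hitProb lam N k with
  | case1 => exact (hitProb.eq_1 _ _).ge
  | case2 => exact hitProb_nonneg hlam _ _
  | case3 N k ih₁ ih₂ =>
    exact add_le_add (mul_le_mul_of_nonneg_left ih₁ hlam.1)
      (mul_le_mul_of_nonneg_left ih₂ (sub_nonneg.2 hlam.2))

lemma hitRatio_mul_le_of_recurrence (hlam : lam ≤ 1) {v : ℕ → ℝ} (hv : ∀ k, 0 ≤ v k)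
    (hrec : ∀ k, v (k + 1) = lam * v k + (1 - lam) * v (k + 2)) (k : ℕ) :
    hitRatio lam * v k ≤ v (k + 1) := by
  by_contra! hlt
  obtain rfl | hlam' := hlam.eq_or_lt
  · simp [hitRatio, hrec k] at hlt
  set c : ℕ → ℝ := fun j ↦ v (j + 1) - hitRatio lam * v j with hc
  -- `c` obeys the first-order recurrence of the other characteristic root, which is at least `1`:
  -- once negative it never recovers, and it drags `v` below `0`.
  have hcrec (j : ℕ) : (1 - lam) * c (j + 1) = max lam (1 - lam) * c j := by
    simp only [hc]
    linear_combination -hrec j + v j * max_mul_hitRatio lam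
      - v (j + 1) * (one_sub_mul_hitRatio lam + min_add_max lam (1 - lam))
  have hck : c k < 0 := sub_neg.2 hlt
  have hcle (n : ℕ) : c (k + n) ≤ c k := by
    induction n with
    | zero => exact le_rfl
    | succ n ih =>
      refine le_trans (le_of_mul_le_mul_left ?_ (sub_pos.2 hlam')) ih
      rw [← add_assoc, hcrec]
      exact mul_le_mul_of_nonpos_right (le_max_right _ _) (ih.trans hck.le)
  have hvle (n : ℕ) : v (k + n) ≤ v k + n * c k := by
    induction n with
    | zero => simp
    | succ n ih =>
      calc v (k + (n + 1)) = hitRatio lam * v (k + n) + c (k + n) := (add_sub_cancel _ _).symm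
        _ ≤ v (k + n) + c k :=
          add_le_add (mul_le_of_le_one_left (hv _) (hitRatio_le_one lam)) (hcle n)
        _ ≤ v k + n * c k + c k := by gcongr
        _ = v k + (n + 1 : ℕ) * c k := by push_cast; ring
  obtain ⟨n, hn⟩ := exists_nat_gt (v k / -c k)
  rw [div_lt_iff₀ (neg_pos.2 hck)] at hn
  linarith [hv (k + n), hvle n]

lemma tendsto_hitProb (hlam : lam ∈ Set.Icc 0 1) (k : ℕ) :
    Tendsto (fun N ↦ hitProb lam N k) atTop (nhds (hitRatio lam ^ k)) := by
  have hbdd (k : ℕ) : BddAbove (Set.range fun N ↦ hitProb lam N k) :=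
    ⟨hitRatio lam ^ k, Set.forall_mem_range.2 fun N ↦ hitProb_le_pow hlam N k⟩
  have hlim (k : ℕ) := tendsto_atTop_ciSup (hitProb_mono hlam k) (hbdd k)
  set v : ℕ → ℝ := fun k ↦ ⨆ N, hitProb lam N k
  have hv (k : ℕ) : 0 ≤ v k := Real.iSup_nonneg fun N ↦ hitProb_nonneg hlam N k
  have hrec (k : ℕ) : v (k + 1) = lam * v k + (1 - lam) * v (k + 2) :=
    tendsto_nhds_unique ((tendsto_add_atTop_iff_nat 1).2 (hlim (k + 1)))
      (((hlim k).const_mul lam).add ((hlim (k + 2)).const_mul (1 - lam)))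
  have hge : hitRatio lam ^ k ≤ v k := by
    induction k with
    | zero => simp [v, hitProb]
    | succ k ih =>
      rw [pow_succ']
      exact (mul_le_mul_of_nonneg_left ih (hitRatio_nonneg hlam.1)).trans
        (hitRatio_mul_le_of_recurrence hlam.2 hv hrec k)
  rw [hge.antisymm (ciSup_le fun N ↦ hitProb_le_pow hlam N k)]
  exact hlim k

end GamblersRuin

section BernoulliProduct

/-- The probability of the value `b` of a single box under the Bernoulli(`lam`) distribution. -/
def bernoulliWeight (lam : ℝ) (b : Bool) : ℝ := if b then lam else 1 - lam

variable {lam : ℝ}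

lemma ofReal_bernoulliWeight (lam : ℝ) (b : Bool) : ENNReal.ofReal (bernoulliWeight lam b) =
    if b then ENNReal.ofReal lam else ENNReal.ofReal (1 - lam) :=
  apply_ite ENNReal.ofReal _ _ _

lemma bernoulliWeight_nonneg (hlam : lam ∈ Set.Icc 0 1) (b : Bool) : 0 ≤ bernoulliWeight lam b := by
  cases b
  · exact sub_nonneg.2 hlam.2
  · exact hlam.1

lemma isBernoulliProduct_iff_measureReal {ν : Measure Cfg} [IsProbabilityMeasure ν]
    (hlam : lam ∈ Set.Icc 0 1) :
    IsBernoulliProduct lam ν ↔ ∀ (s : Finset ℤ) (f : ℤ → Bool),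
      ν.real {η | ∀ x ∈ s, η x = f x} = ∏ x ∈ s, bernoulliWeight lam (f x) := by
  refine (and_iff_right ‹_›).trans (forall₂_congr fun s f ↦ ?_)
  have hnonneg (x : ℤ) : 0 ≤ bernoulliWeight lam (f x) := bernoulliWeight_nonneg hlam _
  simp only [← ofReal_bernoulliWeight]
  rw [← ENNReal.ofReal_prod_of_nonneg fun x _ ↦ hnonneg x, ← ofReal_measureReal,
    ENNReal.ofReal_eq_ofReal_iff measureReal_nonneg (prod_nonneg fun x _ ↦ hnonneg x)]

/-- The Burke property: an event determined by the boxes up to `x` is independent of the load of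
the carrier after passing `x`, and this load is geometric with ratio `r`. -/
structure IndepOfLoad (ν : Measure Cfg) (r : ℝ) (x : ℤ) (A : Set Cfg) : Prop where
  measurableSet : MeasurableSet[past x] A
  measureReal_inter_loadGE (k : ℕ) : ν.real (A ∩ loadGE x k) = ν.real A * r ^ k

end BernoulliProduct

end BoxBall

namespace IsBernoulliProduct

open BoxBall ProbabilityTheory

variable {lam : ℝ} {ν ν' : Measure Cfg}

lemma measure_apply_eq (hν : IsBernoulliProduct lam ν) (x : ℤ) (b : Bool) :
    ν {η | η x = b} = ENNReal.ofReal (bernoulliWeight lam b) := by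
  simpa only [mem_singleton, forall_eq, prod_singleton, ← ofReal_bernoulliWeight] using
    hν.2 {x} fun _ ↦ b

lemma mem_Icc (hν : IsBernoulliProduct lam ν) : lam ∈ Set.Icc 0 1 := by
  have := hν.1
  have hle (b : Bool) : bernoulliWeight lam b ≤ 1 := by
    rw [← ENNReal.ofReal_le_one, ← hν.measure_apply_eq 0 b]
    exact prob_le_one
  exact ⟨by simpa [bernoulliWeight] using hle false, hle true⟩

lemma iIndepFun_apply (hν : IsBernoulliProduct lam ν) : iIndepFun (fun x (η : Cfg) ↦ η x) ν := by
  refine iIndepFun_of_measure_iInter_preimage_singleton measurable_pi_apply fun s f ↦ ?_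
  calc ν (⋂ x ∈ s, (fun η : Cfg ↦ η x) ⁻¹' {f x})
      = ν {η | ∀ x ∈ s, η x = f x} := by congr 1; ext; simp
    _ = ∏ x ∈ s, ENNReal.ofReal (bernoulliWeight lam (f x)) := by
        simp only [hν.2, ofReal_bernoulliWeight]
    _ = ∏ x ∈ s, ν {η | η x = f x} := prod_congr rfl fun x _ ↦ (hν.measure_apply_eq x _).symm

lemma unique (hν : IsBernoulliProduct lam ν) (hν' : IsBernoulliProduct lam ν') : ν = ν' := by
  have eq_infinitePi {μ : Measure Cfg} (hμ : IsBernoulliProduct lam μ) :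
      μ = Measure.infinitePi fun x ↦ μ.map fun η ↦ η x := by
    simpa only [Measure.map_id'] using
      hμ.iIndepFun_apply.map_fun_eq_infinitePi_map measurable_pi_apply
  have hmarginal (x : ℤ) : (ν.map fun η ↦ η x) = ν'.map fun η ↦ η x := by
    refine Measure.ext_of_singleton fun b ↦ ?_
    rw [Measure.map_apply (measurable_pi_apply x) (measurableSet_singleton b),
      Measure.map_apply (measurable_pi_apply x) (measurableSet_singleton b)]
    exact (hν.measure_apply_eq x b).trans (hν'.measure_apply_eq x b).symm
  rw [eq_infinitePi hν, eq_infinitePi hν']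
  simp only [hmarginal]

lemma measureReal_inter_apply_eq (hν : IsBernoulliProduct lam ν) {x : ℤ} {A : Set Cfg}
    (hA : MeasurableSet[past (x - 1)] A) (b : Bool) :
    ν.real (A ∩ {η | η x = b}) = ν.real A * bernoulliWeight lam b := by
  have hdisj : Disjoint (Set.Iic (x - 1)) {x} := by simp
  have hx : MeasurableSet[cylinderEvents {x}] {η : Cfg | η x = b} :=
    measurable_cylinderEvent_apply (X := fun _ ↦ Bool) (Set.mem_singleton x)
      (measurableSet_singleton b)
  rw [measureReal_def, (Indep_iff _ _ _).1
      (indep_cylinderEvents_of_disjoint hν.iIndepFun_apply hdisj) _ _ hA hx,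
    ENNReal.toReal_mul, hν.measure_apply_eq,
    ENNReal.toReal_ofReal (bernoulliWeight_nonneg hν.mem_Icc b), measureReal_def]

lemma measureReal_le_carrier (hν : IsBernoulliProduct lam ν) (N k : ℕ) (x : ℤ) :
    ν.real {η | k ≤ carrier N η x} = hitProb lam N k := by
  have := hν.1
  induction N generalizing k x with
  | zero => cases k <;> simp [carrier, hitProb]
  | succ N ih =>
    cases k with
    | zero => simp [hitProb]
    | succ k =>
      have hmeas (j : ℕ) : MeasurableSet[past (x - 1)] {η | j ≤ carrier N η (x - 1)} :=
        measurable_carrier N (x - 1) measurableSet_Ici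
      have htrue : {η | k + 1 ≤ carrier (N + 1) η x} ∩ {η | η x = true} =
          {η | k ≤ carrier N η (x - 1)} ∩ {η | η x = true} :=
        Set.ext fun _ ↦ and_congr_left succ_le_carrier_succ_of_true
      have hfalse : {η | k + 1 ≤ carrier (N + 1) η x} ∩ {η | η x = false} =
          {η | k + 2 ≤ carrier N η (x - 1)} ∩ {η | η x = false} :=
        Set.ext fun _ ↦ and_congr_left succ_le_carrier_succ_of_false
      rw [measureReal_eq_add_of_bool ν (measurable_pi_apply x), htrue, hfalse,
        hν.measureReal_inter_apply_eq (hmeas _), hν.measureReal_inter_apply_eq (hmeas _),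
        ih, ih, mul_comm, mul_comm (hitProb _ _ _)]
      rfl

lemma measureReal_loadGE (hν : IsBernoulliProduct lam ν) (x : ℤ) (k : ℕ) :
    ν.real (loadGE x k) = hitRatio lam ^ k := by
  have := hν.1
  have hmono : Monotone fun N ↦ {η | k ≤ carrier N η x} :=
    monotone_nat_of_le_succ fun N η hη ↦ le_trans hη (carrier_le_carrier_succ N η x)
  have hlim := (ENNReal.tendsto_toReal (measure_ne_top ν _)).comp
    (tendsto_measure_iUnion_atTop (μ := ν) hmono)
  rw [← Set.ofPred_exists] at hlim
  exact tendsto_nhds_unique hlim <| (tendsto_hitProb hν.mem_Icc k).congr fun N ↦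
    (hν.measureReal_le_carrier N k x).symm

lemma indepOfLoad_univ (hν : IsBernoulliProduct lam ν) (x : ℤ) :
    IndepOfLoad ν (hitRatio lam) x Set.univ := by
  have := hν.1
  refine ⟨MeasurableSet.univ, fun k ↦ ?_⟩
  rw [Set.univ_inter, hν.measureReal_loadGE, probReal_univ, one_mul]

section Burke

variable {x : ℤ} {A : Set Cfg}

lemma measureReal_inter_loadGE_inter_apply_eq (hν : IsBernoulliProduct lam ν)
    (hA : IndepOfLoad ν (hitRatio lam) (x - 1) A) (k : ℕ) (b : Bool) :
    ν.real (A ∩ loadGE (x - 1) k ∩ {η | η x = b}) =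
      ν.real A * hitRatio lam ^ k * bernoulliWeight lam b := by
  rw [hν.measureReal_inter_apply_eq (hA.measurableSet.inter (measurableSet_loadGE _ _)),
    hA.measureReal_inter_loadGE]

lemma measureReal_inter_bbsT_true_inter_loadGE (hν : IsBernoulliProduct lam ν)
    (hA : IndepOfLoad ν (hitRatio lam) (x - 1) A) (k : ℕ) :
    ν.real (A ∩ {η | bbsT η x = true} ∩ loadGE x k) =
      ν.real A * min lam (1 - lam) * hitRatio lam ^ k := by
  have hset : A ∩ {η | bbsT η x = true} ∩ loadGE x k =
      A ∩ loadGE (x - 1) (k + 1) ∩ {η | η x = false} := by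
    rw [Set.inter_assoc, Set.inter_comm _ (loadGE x k), Set.inter_assoc]
    exact congrArg (A ∩ ·) (Set.ext fun _ ↦ mem_loadGE_and_bbsT_eq_true_iff)
  rw [hset, hν.measureReal_inter_loadGE_inter_apply_eq hA, ← one_sub_mul_hitRatio]
  simp only [bernoulliWeight, Bool.false_eq_true, if_false]
  ring

lemma measureReal_inter_bbsT_false_inter_loadGE_succ (hν : IsBernoulliProduct lam ν)
    (hA : IndepOfLoad ν (hitRatio lam) (x - 1) A) (k : ℕ) :
    ν.real (A ∩ {η | bbsT η x = false} ∩ loadGE x (k + 1)) =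
      ν.real A * (1 - min lam (1 - lam)) * hitRatio lam ^ (k + 1) := by
  have hset : A ∩ {η | bbsT η x = false} ∩ loadGE x (k + 1) =
      A ∩ loadGE (x - 1) k ∩ {η | η x = true} := by
    rw [Set.inter_assoc, Set.inter_comm _ (loadGE x _), Set.inter_assoc]
    exact congrArg (A ∩ ·) (Set.ext fun _ ↦ mem_loadGE_succ_and_bbsT_eq_false_iff)
  rw [hset, hν.measureReal_inter_loadGE_inter_apply_eq hA, bernoulliWeight, if_pos rfl]
  linear_combination -ν.real A * hitRatio lam ^ k * one_sub_min_mul_hitRatio lam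

lemma measureReal_inter_bbsT_eq (hν : IsBernoulliProduct lam ν)
    (hA : IndepOfLoad ν (hitRatio lam) (x - 1) A) (b : Bool) :
    ν.real (A ∩ {η | bbsT η x = b}) = ν.real A * bernoulliWeight (min lam (1 - lam)) b := by
  have := hν.1
  have htrue : ν.real (A ∩ {η | bbsT η x = true}) = ν.real A * min lam (1 - lam) := by
    simpa only [loadGE_zero, Set.inter_univ, pow_zero, mul_one] using
      hν.measureReal_inter_bbsT_true_inter_loadGE hA 0
  have hadd := measureReal_eq_add_of_bool ν (measurable_pi_iff.1 measurable_bbsT x) A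
  cases b
  · simp only [bernoulliWeight, Bool.false_eq_true, if_false]
    linarith
  · exact htrue

lemma indepOfLoad_inter_bbsT_eq (hν : IsBernoulliProduct lam ν)
    (hA : IndepOfLoad ν (hitRatio lam) (x - 1) A) (b : Bool) :
    IndepOfLoad ν (hitRatio lam) x (A ∩ {η | bbsT η x = b}) where
  measurableSet := (past_mono (sub_one_lt x).le _ hA.measurableSet).inter
    (measurable_bbsT_apply x (measurableSet_singleton b))
  measureReal_inter_loadGE k := by
    rw [hν.measureReal_inter_bbsT_eq hA]
    cases b with
    | true => exact hν.measureReal_inter_bbsT_true_inter_loadGE hA k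
    | false =>
      cases k with
      | zero =>
        rw [loadGE_zero, Set.inter_univ, pow_zero, mul_one, hν.measureReal_inter_bbsT_eq hA]
      | succ k => exact hν.measureReal_inter_bbsT_false_inter_loadGE_succ hA k

lemma indepOfLoad_of_sub_one (hν : IsBernoulliProduct lam ν)
    (hA : IndepOfLoad ν (hitRatio lam) (x - 1) A) : IndepOfLoad ν (hitRatio lam) x A where
  measurableSet := past_mono (sub_one_lt x).le _ hA.measurableSet
  measureReal_inter_loadGE k := by
    have := hν.1
    have hsplit := measureReal_eq_add_of_bool ν (measurable_pi_iff.1 measurable_bbsT x)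
    rw [hsplit (A ∩ loadGE x k), hsplit A, Set.inter_right_comm A (loadGE x k),
      Set.inter_right_comm A (loadGE x k),
      (hν.indepOfLoad_inter_bbsT_eq hA true).measureReal_inter_loadGE,
      (hν.indepOfLoad_inter_bbsT_eq hA false).measureReal_inter_loadGE, add_mul]

lemma indepOfLoad_mono (hν : IsBernoulliProduct lam ν) {y : ℤ} (hxy : x ≤ y)
    (hA : IndepOfLoad ν (hitRatio lam) x A) : IndepOfLoad ν (hitRatio lam) y A := by
  induction y, hxy using Int.leInduction with
  | base => exact hA
  | succ y _ ih => exact hν.indepOfLoad_of_sub_one (by rwa [add_sub_cancel_right])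

end Burke

lemma indepOfLoad_bbsT_cylinder (hν : IsBernoulliProduct lam ν) (s : Finset ℤ) (f : ℤ → Bool)
    {x : ℤ} (hx : ∀ y ∈ s, y ≤ x) :
    IndepOfLoad ν (hitRatio lam) x {η | ∀ y ∈ s, bbsT η y = f y} ∧
      ν.real {η | ∀ y ∈ s, bbsT η y = f y} =
        ∏ y ∈ s, bernoulliWeight (min lam (1 - lam)) (f y) := by
  have := hν.1
  induction s using Finset.induction_on_max generalizing x with
  | empty => simpa using hν.indepOfLoad_univ x
  | insert a s hlt ih =>
    obtain ⟨hindep, hmeasure⟩ := ih fun y hy ↦ Int.le_sub_one_of_lt (hlt y hy)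
    have hset : {η | ∀ y ∈ insert a s, bbsT η y = f y} =
        {η | ∀ y ∈ s, bbsT η y = f y} ∩ {η | bbsT η a = f a} := by
      ext
      simp [and_comm]
    rw [hset, prod_insert fun ha ↦ (hlt a ha).false]
    refine ⟨hν.indepOfLoad_mono (hx a (mem_insert_self a s))
      (hν.indepOfLoad_inter_bbsT_eq hindep (f a)), ?_⟩
    rw [hν.measureReal_inter_bbsT_eq hindep, hmeasure, mul_comm]

end IsBernoulliProduct

theorem bernoulli_product_T_invariant_general {lam : ℝ} {ν : Measure Cfg}
    (hν : IsBernoulliProduct lam ν) :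
    IsBernoulliProduct (min lam (1 - lam)) (ν.map bbsT) := by
  have := hν.1
  have := Measure.isProbabilityMeasure_map (μ := ν) BoxBall.measurable_bbsT.aemeasurable
  have hmin : min lam (1 - lam) ∈ Set.Icc 0 1 :=
    ⟨le_min hν.mem_Icc.1 (sub_nonneg.2 hν.mem_Icc.2), (min_le_left _ _).trans hν.mem_Icc.2⟩
  refine (BoxBall.isBernoulliProduct_iff_measureReal hmin).2 fun s f ↦ ?_
  obtain ⟨x, hx⟩ := s.bddAbove
  rw [map_measureReal_apply BoxBall.measurable_bbsT (by measurability)]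
  exact (hν.indepOfLoad_bbsT_cylinder s f hx).2

/-- For `0 < lam < 1/2`, the Bernoulli(`lam`) product measure
`ν_lam = Bernoulli(lam)^{⊗ℤ}` is invariant under the box-ball operator `T`:
the pushforward of `ν_lam` under `T` equals `ν_lam`. -/
theorem bernoulli_product_T_invariant (lam : ℝ) (h0 : 0 < lam) (h1 : lam < 1 / 2)
    (ν : MeasureTheory.Measure Cfg) (hν : IsBernoulliProduct lam ν) :
    ν.map bbsT = ν := by
  have hT := bernoulli_product_T_invariant_general hν
  rw [min_eq_left (by linarith)] at hT
  exact hT.unique hν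
end
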